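/- arXiv:1012.5591 — 2 statements merged into one kernel-verified Lean document; each statement's English description precedes it below -/
import Mathlib

section
/- For every ε ∈ (0, 4π), the finite supremum S_ε = sup{ ∫_B e^{(4π−ε) u²} dx : u ∈ Σ, H(u) ≤ 1 } is attained in the completion of Σ under the Hardy norm in the following sense: there exist a measurable function u_ε : B → ℝ and a sequence (u_k) in Σ with H(u_k) ≤ 1 for all k, lim_{k→∞} H(u_k) = 1, H(u_j − u_k) → 0 as j, k → ∞, and u_k → u_ε almost everywhere in B, such that ∫_B e^{(4π−ε) u_ε(x)²} dx = S_ε. -/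
/-!
The ground state substitution `u = √(1 - r²) v` turns the Hardy functional of a radial function
into `H(u) = 2π ∫ ((1 - r²) v'² + v²) r dr` (`IsRad.H_eq_dens`). Hence `H` is a nonnegative
quadratic form on radial test functions, and by Cauchy–Schwarz `H(u) ≤ 1` forces
`|v(r) - v(s)|² ≤ (h(r) - h(s)) / 2π` with `h' = 1 / (r (1 - r²))` (`IsRad.gprof_sub_sq_le`).

For `u ∈ Σ` with `H(u) ≤ 1` this yields `u(r) ≤ 2 + √(log(1/r) / 2π)`, so the functions
`exp((4π - ε) u²)` are dominated by one integrable function `C |x|^(-β)`, `β < 2`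
(`exists_exp_bound`); the supremum is finite and the exponential integral is continuous along
pointwise convergent admissible sequences (`tendsto_integral_exp`). The same estimate is an
equicontinuity bound, so a maximizing sequence has a subsequence converging at every point of the
punctured disc to some `w` (`exists_convergent_subseq`), and `w` attains the supremum.

To approximate `w` in the Hardy norm, almost minimizers of `H` over the convex hulls of the tails
of that subsequence are taken. They lie in `Σ`, converge pointwise to `w`, and are Cauchy by the
parallelogram identity (`exists_cauchy_convex_comb`). If their energies tended to a limit below
`1`, a multiple `c w` with `c > 1` would still be an admissible limit, forcing `w = 0` almost
everywhere; but a nonzero element of `Σ` beats the zero function.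
-/

open MeasureTheory Real Filter

noncomputable section

/-- `ℝ²` as a Euclidean space. -/
abbrev E2 : Type := EuclideanSpace ℝ (Fin 2)

/-- The open unit disc in `ℝ²`. -/
def B2 : Set E2 := Metric.ball 0 1

/-- `u ∈ C_c^∞(B)`: a smooth function with compact support contained in the open unit disc. -/
def IsTest (u : E2 → ℝ) : Prop :=
  ContDiff ℝ (⊤ : ℕ∞) u ∧ HasCompactSupport u ∧ tsupport u ⊆ B2

/-- `u ∈ Σ`: a smooth compactly supported function on the unit disc which is radially
symmetric and nonincreasing in the radius (encoded as: `‖x‖ ≤ ‖y‖ → u y ≤ u x`, which is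
equivalent to radial symmetry together with monotonicity in `r`). -/
def IsSigma (u : E2 → ℝ) : Prop :=
  IsTest u ∧ ∀ x y : E2, ‖x‖ ≤ ‖y‖ → u y ≤ u x

/-- The localized Hardy functional `H_Ω(u) = ∫_Ω |∇u|² − ∫_Ω u²/(1−|x|²)²`. -/
def HOn (Ω : Set E2) (u : E2 → ℝ) : ℝ :=
  (∫ x in Ω, ‖gradient u x‖ ^ 2) - ∫ x in Ω, (u x) ^ 2 / (1 - ‖x‖ ^ 2) ^ 2

/-- The Hardy functional `H(u) = H_B(u)`. -/
def H (u : E2 → ℝ) : ℝ := HOn B2 u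

/-- The point `(r, 0) ∈ ℝ²`, used to evaluate a radial function at radius `r`. -/
def pt (r : ℝ) : E2 := EuclideanSpace.single 0 r

section Radial

open Set

/-! ### Radial test functions and their profiles -/

/-- Radially symmetric test functions. Unlike `Σ`, this class is a vector space: it contains
the differences of members of `Σ`. -/
def IsRad (u : E2 → ℝ) : Prop :=
  IsTest u ∧ ∀ x y : E2, ‖x‖ = ‖y‖ → u x = u y

/-- The radial profile `r ↦ u(r, 0)`. -/
def prof (u : E2 → ℝ) (r : ℝ) : ℝ := u (pt r)

lemma IsSigma.isRad {u : E2 → ℝ} (h : IsSigma u) : IsRad u :=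
  ⟨h.1, fun x y hxy => le_antisymm (h.2 y x hxy.ge) (h.2 x y hxy.le)⟩

lemma norm_pt (r : ℝ) : ‖pt r‖ = |r| := by
  simp [pt]

lemma IsRad.eq_prof {u : E2 → ℝ} (h : IsRad u) (x : E2) : u x = prof u ‖x‖ :=
  h.2 _ _ (by rw [norm_pt, abs_of_nonneg (norm_nonneg x)])

lemma contDiff_pt : ContDiff ℝ (⊤ : ℕ∞) pt := by
  have : pt = fun r : ℝ => r • (EuclideanSpace.single (0 : Fin 2) (1 : ℝ) : E2) := by
    funext r
    ext i
    simp [pt]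
  rw [this]
  fun_prop

lemma IsRad.contDiff_prof {u : E2 → ℝ} (h : IsRad u) : ContDiff ℝ (⊤ : ℕ∞) (prof u) :=
  h.1.1.comp contDiff_pt

lemma IsRad.hasDerivAt_prof {u : E2 → ℝ} (h : IsRad u) (r : ℝ) :
    HasDerivAt (prof u) (deriv (prof u) r) r :=
  (h.contDiff_prof.differentiable (by simp) r).hasDerivAt

lemma IsRad.continuous_deriv_prof {u : E2 → ℝ} (h : IsRad u) :
    Continuous (deriv (prof u)) :=
  h.contDiff_prof.continuous_deriv (by exact_mod_cast le_top)

lemma IsTest.exists_radius {u : E2 → ℝ} (h : IsTest u) :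
    ∃ R < 1, ∀ x : E2, R ≤ ‖x‖ → u x = 0 := by
  obtain ⟨hs, hc, hb⟩ := h
  rcases (tsupport u).eq_empty_or_nonempty with he | hne
  · exact ⟨0, one_pos, fun x _ => image_eq_zero_of_notMem_tsupport (by simp [he])⟩
  obtain ⟨x₀, hx₀, hmax⟩ := IsCompact.exists_isMaxOn (s := tsupport u) hc hne
    (continuous_norm.continuousOn)
  have h1 : ‖x₀‖ < 1 := by simpa [B2] using hb hx₀
  refine ⟨(‖x₀‖ + 1) / 2, by linarith, fun x hx => ?_⟩
  refine image_eq_zero_of_notMem_tsupport fun hxt => ?_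
  have : ‖x‖ ≤ ‖x₀‖ := hmax hxt
  linarith

lemma prof_eq_zero {u : E2 → ℝ} {R : ℝ} (hR : ∀ x : E2, R ≤ ‖x‖ → u x = 0) {r : ℝ}
    (hr : R ≤ r) : prof u r = 0 :=
  hR _ (by rw [norm_pt]; exact hr.trans (le_abs_self r))

lemma deriv_prof_eq_zero {u : E2 → ℝ} {R : ℝ} (hR : ∀ x : E2, R ≤ ‖x‖ → u x = 0) {r : ℝ}
    (hr : R < r) : deriv (prof u) r = 0 := by
  have : prof u =ᶠ[nhds r] fun _ => 0 := by
    filter_upwards [Ioi_mem_nhds hr] with s hs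
    exact prof_eq_zero hR (le_of_lt hs)
  rw [this.deriv_eq]
  simp

lemma IsRad.norm_gradient {u : E2 → ℝ} (h : IsRad u) {x : E2} (hx : x ≠ 0) :
    ‖gradient u x‖ = |deriv (prof u) ‖x‖| := by
  have hd : DifferentiableAt ℝ (fun y : E2 => ‖y‖) x := by
    exact (contDiffAt_norm ℝ hx).differentiableAt (n := 1) one_ne_zero
  have hu : u = fun y => prof u ‖y‖ := funext h.eq_prof
  have h1 : HasFDerivAt u (deriv (prof u) ‖x‖ • fderiv ℝ (fun y : E2 => ‖y‖) x) x := by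
    have := (h.hasDerivAt_prof ‖x‖).comp_hasFDerivAt x hd.hasFDerivAt
    rw [hu]
    simpa [Function.comp_def, ← hu] using this
  rw [gradient, LinearIsometryEquiv.norm_map, h1.fderiv, norm_smul, norm_fderiv_norm hd]
  simp

lemma integral_radial (f : ℝ → ℝ) :
    ∫ x : E2, f ‖x‖ = 2 * π * ∫ r in Ioi (0 : ℝ), r * f r := by
  rw [integral_fun_norm_addHaar volume f]
  have hv : (volume : Measure E2).real (Metric.ball 0 1) = π := by
    simp [Measure.real, EuclideanSpace.volume_ball_fin_two, pi_pos.le]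
  rw [hv]
  simp [mul_assoc]

lemma integral_Ioi_cut {f : ℝ → ℝ} {R : ℝ} (hR0 : 0 ≤ R) (hf : ∀ r, R < r → f r = 0) :
    ∫ r in Ioi (0 : ℝ), f r = ∫ r in (0 : ℝ)..R, f r := by
  rw [intervalIntegral.integral_of_le hR0]
  refine setIntegral_eq_of_subset_of_forall_sdiff_eq_zero measurableSet_Ioi
    (fun x hx => hx.1) ?_
  rintro r ⟨h1, h2⟩
  exact hf r (not_le.mp fun h => h2 ⟨h1, h⟩)

/-- The Hardy functional of a radial function in polar coordinates. -/
lemma IsRad.H_eq_sub {u : E2 → ℝ} (h : IsRad u) {R : ℝ} (hR0 : 0 ≤ R) (hR1 : R < 1)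
    (hR : ∀ x : E2, R ≤ ‖x‖ → u x = 0) :
    H u = 2 * π * ((∫ r in (0 : ℝ)..R, r * deriv (prof u) r ^ 2)
      - ∫ r in (0 : ℝ)..R, r * (prof u r ^ 2 / (1 - r ^ 2) ^ 2)) := by
  have hnz : ∀ᵐ x : E2, x ≠ 0 := by
    simp [ae_iff]
  have hout : ∀ x : E2, x ∉ B2 → 1 ≤ ‖x‖ := fun x hx => by
    simpa [B2] using hx
  have e1 : ∫ x in B2, ‖gradient u x‖ ^ 2
      = 2 * π * ∫ r in (0 : ℝ)..R, r * deriv (prof u) r ^ 2 := by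
    rw [setIntegral_eq_integral_of_forall_compl_eq_zero,
      integral_congr_ae (g := fun x : E2 => (fun r => deriv (prof u) r ^ 2) ‖x‖),
      integral_radial (fun r => deriv (prof u) r ^ 2), integral_Ioi_cut hR0]
    · intro r hr
      simp [deriv_prof_eq_zero hR hr]
    · filter_upwards [hnz] with x hx
      simp [h.norm_gradient hx]
    · intro x hx
      have h1 := hout x hx
      have : x ≠ 0 := by
        rintro rfl
        simp at h1
        linarith
      rw [h.norm_gradient this, deriv_prof_eq_zero hR (hR1.trans_le h1)]
      simp
  have e2 : ∫ x in B2, (u x) ^ 2 / (1 - ‖x‖ ^ 2) ^ 2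
      = 2 * π * ∫ r in (0 : ℝ)..R, r * (prof u r ^ 2 / (1 - r ^ 2) ^ 2) := by
    rw [setIntegral_eq_integral_of_forall_compl_eq_zero,
      integral_congr_ae (g := fun x : E2 =>
        (fun r => prof u r ^ 2 / (1 - r ^ 2) ^ 2) ‖x‖),
      integral_radial (fun r => prof u r ^ 2 / (1 - r ^ 2) ^ 2), integral_Ioi_cut hR0]
    · intro r hr
      simp [prof_eq_zero hR hr.le]
    · filter_upwards with x
      rw [h.eq_prof x]
    · intro x hx
      rw [hR x (hR1.le.trans (hout x hx))]
      simp
  rw [H, HOn, e1, e2]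
  ring

/-! ### The ground state representation of the Hardy functional -/

/-- The density of `H(u) / 2π` after the ground state substitution `u = √(1 - r²) v`: it equals
`r ((1 - r²) v'² + v²)`, written in terms of `u`. -/
def dens (u : E2 → ℝ) (r : ℝ) : ℝ :=
  r * (deriv (prof u) r + r * prof u r / (1 - r ^ 2)) ^ 2 + r * prof u r ^ 2 / (1 - r ^ 2)

lemma one_sub_sq_pos {r R : ℝ} (hr0 : 0 ≤ r) (hr : r ≤ R) (hR1 : R < 1) : 0 < 1 - r ^ 2 := by
  nlinarith

lemma IsRad.continuousOn_dens {u : E2 → ℝ} (h : IsRad u) {R : ℝ} (hR1 : R < 1) :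
    ContinuousOn (dens u) (Icc 0 R) := by
  have h1 : ContinuousOn (prof u) (Icc 0 R) := h.contDiff_prof.continuous.continuousOn
  have h2 : ContinuousOn (deriv (prof u)) (Icc 0 R) := h.continuous_deriv_prof.continuousOn
  have h3 : ∀ r ∈ Icc 0 R, 1 - r ^ 2 ≠ 0 := fun r hr => (one_sub_sq_pos hr.1 hr.2 hR1).ne'
  unfold dens
  fun_prop (disch := assumption)

lemma dens_nonneg (u : E2 → ℝ) {r R : ℝ} (hr0 : 0 ≤ r) (hr : r ≤ R) (hR1 : R < 1) :
    0 ≤ dens u r := by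
  have := one_sub_sq_pos hr0 hr hR1
  unfold dens
  positivity

/-- Integrating the square in `dens` by parts, with boundary term `r² u² / (1 - r²)`
vanishing at both ends, recovers the Hardy functional. -/
lemma IsRad.H_eq_dens {u : E2 → ℝ} (h : IsRad u) {R : ℝ} (hR0 : 0 ≤ R) (hR1 : R < 1)
    (hR : ∀ x : E2, R ≤ ‖x‖ → u x = 0) :
    H u = 2 * π * ∫ r in (0 : ℝ)..R, dens u r := by
  have hc1 : ContinuousOn (prof u) (Icc 0 R) := h.contDiff_prof.continuous.continuousOn
  have hc2 : ContinuousOn (deriv (prof u)) (Icc 0 R) := h.continuous_deriv_prof.continuousOn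
  have hc3 : ∀ r ∈ Icc 0 R, 1 - r ^ 2 ≠ 0 := fun r hr => (one_sub_sq_pos hr.1 hr.2 hR1).ne'
  have hc4 : ∀ r ∈ Icc 0 R, (1 - r ^ 2) ^ 2 ≠ 0 := fun r hr => pow_ne_zero 2 (hc3 r hr)
  have i1 : IntervalIntegrable (fun r => r * deriv (prof u) r ^ 2) volume 0 R :=
    ContinuousOn.intervalIntegrable_of_Icc hR0 (by fun_prop)
  have i2 : IntervalIntegrable (fun r => r * (prof u r ^ 2 / (1 - r ^ 2) ^ 2)) volume 0 R :=
    ContinuousOn.intervalIntegrable_of_Icc hR0 (by fun_prop (disch := assumption))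
  have i3 : IntervalIntegrable (dens u) volume 0 R :=
    ContinuousOn.intervalIntegrable_of_Icc hR0 (h.continuousOn_dens hR1)
  have key := intervalIntegral.integral_eq_sub_of_hasDerivAt (a := 0) (b := R)
    (f := fun r => r ^ 2 * prof u r ^ 2 / (1 - r ^ 2))
    (f' := fun r => dens u r - (r * deriv (prof u) r ^ 2
      - r * (prof u r ^ 2 / (1 - r ^ 2) ^ 2))) ?_ (i3.sub (i1.sub i2))
  · rw [intervalIntegral.integral_sub i3 (i1.sub i2), intervalIntegral.integral_sub i1 i2] at key
    simp only [prof_eq_zero hR le_rfl] at key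
    rw [h.H_eq_sub hR0 hR1 hR]
    congr 1
    norm_num at key
    linarith
  · intro r hr
    rw [uIcc_of_le hR0] at hr
    have hne := hc3 r hr
    have hd := h.hasDerivAt_prof r
    have := (((hasDerivAt_id r).pow 2).mul (hd.pow 2)).div
      ((((hasDerivAt_id r).pow 2).const_sub 1)) hne
    convert! this using 1
    simp only [dens, id, Pi.mul_apply, Pi.pow_apply]
    field_simp
    ring

lemma exists_radius₂ {u w : E2 → ℝ} (hu : IsTest u) (hw : IsTest w) (a : ℝ) (ha : a < 1) :
    ∃ R, a ≤ R ∧ 0 ≤ R ∧ R < 1 ∧ (∀ x : E2, R ≤ ‖x‖ → u x = 0) ∧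
      ∀ x : E2, R ≤ ‖x‖ → w x = 0 := by
  obtain ⟨R, hR, h⟩ := hu.exists_radius
  obtain ⟨R', hR', h'⟩ := hw.exists_radius
  refine ⟨max (max R R') (max a 0), by simp, by simp, by simp [*], fun x hx => h x ?_,
    fun x hx => h' x ?_⟩ <;> simp at hx <;> tauto

lemma IsRad.H_nonneg {u : E2 → ℝ} (h : IsRad u) : 0 ≤ H u := by
  obtain ⟨R, -, hR0, hR1, hR, -⟩ := exists_radius₂ h.1 h.1 0 one_pos
  rw [h.H_eq_dens hR0 hR1 hR]
  have := intervalIntegral.integral_nonneg hR0 (f := dens u) (μ := volume)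
    fun r hr => dens_nonneg u hr.1 hr.2 hR1
  have := pi_pos
  positivity

lemma IsTest.of_radius {u : E2 → ℝ} (hu : ContDiff ℝ (⊤ : ℕ∞) u) {R : ℝ} (hR1 : R < 1)
    (hR : ∀ x : E2, R ≤ ‖x‖ → u x = 0) : IsTest u := by
  have hsub : tsupport u ⊆ Metric.closedBall 0 R := by
    refine closure_minimal (fun x hx => ?_) Metric.isClosed_closedBall
    by_contra hc
    exact hx (hR x (by simpa using (not_le.mp (by simpa using hc)).le))
  refine ⟨hu, ?_, hsub.trans (Metric.closedBall_subset_ball hR1)⟩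
  exact (isCompact_closedBall (0 : E2) R).of_isClosed_subset (isClosed_tsupport u) hsub

lemma IsTest.comb {u w : E2 → ℝ} (hu : IsTest u) (hw : IsTest w) (s t : ℝ) :
    IsTest (s • u + t • w) := by
  obtain ⟨R, -, hR0, hR1, h1, h2⟩ := exists_radius₂ hu hw 0 one_pos
  have hu1 := hu.1
  have hw1 := hw.1
  refine IsTest.of_radius ?_ hR1 (fun x hx => by simp [h1 x hx, h2 x hx])
  exact (hu1.const_smul s).add (hw1.const_smul t)

lemma IsRad.comb {u w : E2 → ℝ} (hu : IsRad u) (hw : IsRad w) (s t : ℝ) :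
    IsRad (s • u + t • w) :=
  ⟨hu.1.comb hw.1 s t, fun x y hxy => by simp [hu.2 x y hxy, hw.2 x y hxy]⟩

lemma IsSigma.comb {u w : E2 → ℝ} (hu : IsSigma u) (hw : IsSigma w) {s t : ℝ} (hs : 0 ≤ s)
    (ht : 0 ≤ t) : IsSigma (s • u + t • w) := by
  refine ⟨hu.1.comb hw.1 s t, fun x y hxy => ?_⟩
  have h1 := mul_le_mul_of_nonneg_left (hu.2 x y hxy) hs
  have h2 := mul_le_mul_of_nonneg_left (hw.2 x y hxy) ht
  simpa using add_le_add h1 h2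

lemma IsRad.sub {u w : E2 → ℝ} (hu : IsRad u) (hw : IsRad w) : IsRad (u - w) := by
  simpa [sub_eq_add_neg] using hu.comb hw 1 (-1)

lemma dens_comb {u w : E2 → ℝ} (hu : IsRad u) (hw : IsRad w) (s t r : ℝ) :
    dens (s • u + t • w) r =
      r * (s * (deriv (prof u) r + r * prof u r / (1 - r ^ 2))
        + t * (deriv (prof w) r + r * prof w r / (1 - r ^ 2))) ^ 2
      + r * (s * prof u r + t * prof w r) ^ 2 / (1 - r ^ 2) := by
  have hp : prof (s • u + t • w) = fun r => s * prof u r + t * prof w r := by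
    funext r
    simp [prof]
  have hd : deriv (prof (s • u + t • w)) r = s * deriv (prof u) r + t * deriv (prof w) r := by
    rw [hp]
    exact (((hu.hasDerivAt_prof r).const_mul s).add ((hw.hasDerivAt_prof r).const_mul t)).deriv
  rw [dens, hd, hp]
  ring

/-- The parallelogram identity for `H`, in its weighted form. -/
lemma H_convex_comb {u w : E2 → ℝ} (hu : IsRad u) (hw : IsRad w) {s t : ℝ} (hst : s + t = 1) :
    H (s • u + t • w) = s * H u + t * H w - s * t * H (u - w) := by
  obtain ⟨R, -, hR0, hR1, h1, h2⟩ := exists_radius₂ hu.1 hw.1 0 one_pos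
  have i : ∀ {v : E2 → ℝ}, IsRad v → IntervalIntegrable (dens v) volume 0 R := fun hv =>
    ContinuousOn.intervalIntegrable_of_Icc hR0 (hv.continuousOn_dens hR1)
  rw [(hu.comb hw s t).H_eq_dens hR0 hR1 (fun x hx => by simp [h1 x hx, h2 x hx]),
    (hu.sub hw).H_eq_dens hR0 hR1 (fun x hx => by simp [h1 x hx, h2 x hx]),
    hu.H_eq_dens hR0 hR1 h1, hw.H_eq_dens hR0 hR1 h2]
  have : ∫ r in (0 : ℝ)..R, dens (s • u + t • w) r
      = ∫ r in (0 : ℝ)..R, (s * dens u r + t * dens w r - s * t * dens (u - w) r) := by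
    congr 1
    funext r
    have e : u - w = (1 : ℝ) • u + (-1 : ℝ) • w := by simp [sub_eq_add_neg]
    rw [e, dens_comb hu hw, dens_comb hu hw]
    obtain rfl : t = 1 - s := by linarith
    simp only [dens]
    ring
  rw [this, intervalIntegral.integral_sub, intervalIntegral.integral_add,
    intervalIntegral.integral_const_mul, intervalIntegral.integral_const_mul,
    intervalIntegral.integral_const_mul]
  · ring
  · exact (i hu).const_mul s
  · exact (i hw).const_mul t
  · exact ((i hu).const_mul s).add ((i hw).const_mul t)
  · exact (i (hu.sub hw)).const_mul _

lemma H_smul {u : E2 → ℝ} (hu : IsRad u) (c : ℝ) : H (c • u) = c ^ 2 * H u := by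
  obtain ⟨R, -, hR0, hR1, h1, -⟩ := exists_radius₂ hu.1 hu.1 0 one_pos
  have e : c • u = c • u + (0 : ℝ) • u := by simp
  have hc : IsRad (c • u) := by
    rw [e]
    exact hu.comb hu c 0
  rw [hc.H_eq_dens hR0 hR1 (fun x hx => by simp [h1 x hx]), hu.H_eq_dens hR0 hR1 h1]
  have : ∫ r in (0 : ℝ)..R, dens (c • u) r = ∫ r in (0 : ℝ)..R, c ^ 2 * dens u r := by
    congr 1
    funext r
    rw [e, dens_comb hu hu]
    simp only [dens]
    ring
  rw [this, intervalIntegral.integral_const_mul]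
  ring

lemma IsSigma.smul {u : E2 → ℝ} (hu : IsSigma u) {c : ℝ} (hc : 0 ≤ c) : IsSigma (c • u) := by
  simpa using hu.comb hu hc le_rfl

/-! ### Pointwise estimates -/

/-- The ground state profile `v = u / √(1 - r²)`. -/
def gprof (u : E2 → ℝ) (r : ℝ) : ℝ := prof u r / √(1 - r ^ 2)

/-- A primitive of `1 / (r (1 - r²))` on `(0, 1)`. -/
def hlog (r : ℝ) : ℝ := log r - log (1 - r ^ 2) / 2

lemma hasDerivAt_hlog {r : ℝ} (h0 : 0 < r) (h1 : r < 1) :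
    HasDerivAt hlog (1 / (r * (1 - r ^ 2))) r := by
  have hp : 0 < 1 - r ^ 2 := by nlinarith
  have := (Real.hasDerivAt_log h0.ne').sub
    (((((hasDerivAt_id r).pow 2).const_sub 1).log (by simpa using hp.ne')).div_const 2)
  convert! this using 1
  simp only [id, Pi.pow_apply]
  field_simp
  ring

lemma hlog_lt {s r : ℝ} (hs : 0 < s) (hsr : s < r) (hr : r < 1) : hlog s < hlog r := by
  have h1 := Real.log_lt_log hs hsr
  have h2 : log (1 - r ^ 2) ≤ log (1 - s ^ 2) := Real.log_le_log (by nlinarith) (by nlinarith)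
  unfold hlog
  linarith

lemma IsRad.hasDerivAt_gprof {u : E2 → ℝ} (h : IsRad u) {r : ℝ} (h0 : 0 < r) (h1 : r < 1) :
    HasDerivAt (gprof u)
      ((deriv (prof u) r + r * prof u r / (1 - r ^ 2)) / √(1 - r ^ 2)) r := by
  have hp : 0 < 1 - r ^ 2 := by nlinarith
  have hq : 0 < √(1 - r ^ 2) := Real.sqrt_pos.mpr hp
  have hs : √(1 - r ^ 2) ^ 2 = 1 - r ^ 2 := Real.sq_sqrt hp.le
  have hd : HasDerivAt (fun r : ℝ => √(1 - r ^ 2)) (-(2 * r) / (2 * √(1 - r ^ 2))) r := by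
    have := (((hasDerivAt_id r).pow 2).const_sub 1).sqrt (by simpa using hp.ne')
    convert! this using 1
    simp
  have := (h.hasDerivAt_prof r).div hd hq.ne'
  convert! this using 1
  generalize √(1 - r ^ 2) = q at *
  rw [← hs]
  field_simp
  ring

/-- Hölder continuity of the ground state profile with respect to `hlog`: the Cauchy–Schwarz
inequality applied to `∫ v'`, with weight `t (1 - t²)`. -/
lemma IsRad.gprof_sub_sq_le {u : E2 → ℝ} (h : IsRad u) (hH : H u ≤ 1) {s r : ℝ} (hs : 0 < s)
    (hsr : s ≤ r) (hr : r < 1) :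
    (gprof u r - gprof u s) ^ 2 ≤ (hlog r - hlog s) / (2 * π) := by
  rcases hsr.eq_or_lt with rfl | hlt
  · simp
  obtain ⟨R, hrR, hR0, hR1, hR, -⟩ := exists_radius₂ h.1 h.1 r hr
  have hpi := pi_pos
  have hI : ∀ a b : ℝ, 0 ≤ a → a ≤ b → b ≤ R → IntervalIntegrable (dens u) volume a b :=
    fun a b ha hab hb => ContinuousOn.intervalIntegrable_of_Icc hab
      ((h.continuousOn_dens hR1).mono (Icc_subset_Icc ha hb))
  have hJ : ∫ t in s..r, dens u t ≤ 1 / (2 * π) := by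
    have h1 : ∫ t in s..r, dens u t ≤ ∫ t in (0 : ℝ)..R, dens u t := by
      refine intervalIntegral.integral_mono_interval hs.le hsr hrR ?_ (hI 0 R le_rfl hR0 le_rfl)
      filter_upwards [ae_restrict_mem measurableSet_Ioc] with t ht
      exact dens_nonneg u ht.1.le ht.2 hR1
    have h2 := h.H_eq_dens hR0 hR1 hR
    rw [le_div_iff₀ (by positivity)]
    nlinarith
  have key : ∀ c : ℝ, 2 * c * (gprof u r - gprof u s) - c ^ 2 * (hlog r - hlog s)
      ≤ 1 / (2 * π) := by
    intro c
    have hder : ∀ t ∈ Icc s r, HasDerivAt (fun t => 2 * c * gprof u t - c ^ 2 * hlog t)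
        (2 * c * ((deriv (prof u) t + t * prof u t / (1 - t ^ 2)) / √(1 - t ^ 2))
          - c ^ 2 * (1 / (t * (1 - t ^ 2)))) t := fun t ht =>
      ((h.hasDerivAt_gprof (hs.trans_le ht.1) (ht.2.trans_lt hr)).const_mul (2 * c)).sub
        ((hasDerivAt_hlog (hs.trans_le ht.1) (ht.2.trans_lt hr)).const_mul (c ^ 2))
    have hint : IntervalIntegrable (fun t => 2 * c * ((deriv (prof u) t
        + t * prof u t / (1 - t ^ 2)) / √(1 - t ^ 2)) - c ^ 2 * (1 / (t * (1 - t ^ 2))))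
        volume s r := by
      refine ContinuousOn.intervalIntegrable_of_Icc hsr ?_
      have hc1 : ContinuousOn (prof u) (Icc s r) := h.contDiff_prof.continuous.continuousOn
      have hc2 : ContinuousOn (deriv (prof u)) (Icc s r) :=
        h.continuous_deriv_prof.continuousOn
      have hc3 : ∀ t ∈ Icc s r, 1 - t ^ 2 ≠ 0 := fun t ht =>
        (one_sub_sq_pos (hs.le.trans ht.1) ht.2 hr).ne'
      have hc4 : ∀ t ∈ Icc s r, √(1 - t ^ 2) ≠ 0 := fun t ht =>
        (Real.sqrt_pos.mpr (one_sub_sq_pos (hs.le.trans ht.1) ht.2 hr)).ne'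
      have hc5 : ∀ t ∈ Icc s r, t * (1 - t ^ 2) ≠ 0 := fun t ht =>
        mul_ne_zero (hs.trans_le ht.1).ne' (hc3 t ht)
      fun_prop (disch := assumption)
    have hftc := intervalIntegral.integral_eq_sub_of_hasDerivAt
      (fun t ht => hder t (by rwa [uIcc_of_le hsr] at ht)) hint
    have hle := intervalIntegral.integral_mono_on hsr hint (hI s r hs.le hsr hrR) (fun t ht => ?_)
    · rw [hftc] at hle
      linarith
    · have ht0 : 0 < t := hs.trans_le ht.1
      have hp : 0 < 1 - t ^ 2 := one_sub_sq_pos ht0.le ht.2 hr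
      have hq : 0 < √(1 - t ^ 2) := Real.sqrt_pos.mpr hp
      have hsq : √(1 - t ^ 2) ^ 2 = 1 - t ^ 2 := Real.sq_sqrt hp.le
      simp only [dens]
      set g := deriv (prof u) t + t * prof u t / (1 - t ^ 2)
      have h3 : 0 ≤ t * prof u t ^ 2 / (1 - t ^ 2) := by positivity
      have h4 : t * (g - c / (t * √(1 - t ^ 2))) ^ 2
          = t * g ^ 2 - (2 * c * (g / √(1 - t ^ 2)) - c ^ 2 * (1 / (t * (1 - t ^ 2)))) := by
        clear_value g
        generalize √(1 - t ^ 2) = q at *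
        rw [← hsq]
        field_simp
        ring
      have h5 : 0 ≤ t * (g - c / (t * √(1 - t ^ 2))) ^ 2 := by positivity
      linarith
  have hpos : 0 < hlog r - hlog s := sub_pos.mpr (hlog_lt hs hlt hr)
  -- The optimal multiplier in the quadratic inequality `key`.
  have := key ((gprof u r - gprof u s) / (hlog r - hlog s))
  generalize gprof u r - gprof u s = D at *
  generalize hlog r - hlog s = Δ at *
  have e : 2 * (D / Δ) * D - (D / Δ) ^ 2 * Δ = D ^ 2 / Δ := by
    field_simp
    ring
  rw [e, div_le_iff₀ hpos] at this
  calc D ^ 2 ≤ 1 / (2 * π) * Δ := this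
    _ = Δ / (2 * π) := by ring

lemma IsSigma.nonneg {u : E2 → ℝ} (h : IsSigma u) (x : E2) : 0 ≤ u x := by
  obtain ⟨R, hR1, hR⟩ := h.1.exists_radius
  have := h.2 x (pt (max R ‖x‖)) (by rw [norm_pt]; exact (le_max_right _ _).trans (le_abs_self _))
  rwa [hR (pt (max R ‖x‖)) (by rw [norm_pt]; exact (le_max_left _ _).trans (le_abs_self _))] at this

lemma IsSigma.prof_anti {u : E2 → ℝ} (h : IsSigma u) {s r : ℝ} (hs : 0 ≤ s) (hsr : s ≤ r) :
    prof u r ≤ prof u s :=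
  h.2 _ _ (by rw [norm_pt, norm_pt, abs_of_nonneg hs, abs_of_nonneg (hs.trans hsr)]; exact hsr)

/-- By monotonicity `u ≥ u(1/2)` on the disc of radius `1/2`, and `∫ u² ≤ H(u)`. -/
lemma IsSigma.prof_half_sq_le {u : E2 → ℝ} (h : IsSigma u) (hH : H u ≤ 1) :
    prof u (1 / 2) ^ 2 ≤ 4 / π := by
  obtain ⟨R, hrR, hR0, hR1, hR, -⟩ := exists_radius₂ h.1 h.1 (1 / 2) (by norm_num)
  have hpi := pi_pos
  have hI : IntervalIntegrable (dens u) volume 0 R :=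
    ContinuousOn.intervalIntegrable_of_Icc hR0 (h.isRad.continuousOn_dens hR1)
  have hI' : IntervalIntegrable (dens u) volume 0 (1 / 2) :=
    ContinuousOn.intervalIntegrable_of_Icc (by norm_num)
      ((h.isRad.continuousOn_dens hR1).mono (Icc_subset_Icc le_rfl hrR))
  have h1 : ∫ t in (0 : ℝ)..(1 / 2), dens u t ≤ ∫ t in (0 : ℝ)..R, dens u t := by
    refine intervalIntegral.integral_mono_interval le_rfl (by norm_num) hrR ?_ hI
    filter_upwards [ae_restrict_mem measurableSet_Ioc] with t ht
    exact dens_nonneg u ht.1.le ht.2 hR1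
  have h2 : ∫ t in (0 : ℝ)..(1 / 2), t * prof u (1 / 2) ^ 2
      ≤ ∫ t in (0 : ℝ)..(1 / 2), dens u t := by
    refine intervalIntegral.integral_mono_on (by norm_num)
      (Continuous.intervalIntegrable (by fun_prop) _ _) hI' fun t ht => ?_
    have hp : 0 < 1 - t ^ 2 := one_sub_sq_pos ht.1 ht.2 (by norm_num)
    have h3 : prof u (1 / 2) ^ 2 ≤ prof u t ^ 2 :=
      pow_le_pow_left₀ (h.nonneg _) (h.prof_anti ht.1 ht.2) 2
    have h4 : t * prof u t ^ 2 ≤ t * prof u t ^ 2 / (1 - t ^ 2) := by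
      rw [le_div_iff₀ hp]
      nlinarith [mul_nonneg (mul_nonneg ht.1 (sq_nonneg (prof u t))) (sq_nonneg t)]
    have h5 : 0 ≤ t * (deriv (prof u) t + t * prof u t / (1 - t ^ 2)) ^ 2 :=
      mul_nonneg ht.1 (sq_nonneg _)
    have h6 := mul_le_mul_of_nonneg_left h3 ht.1
    unfold dens
    linarith
  have h3 := h.isRad.H_eq_dens hR0 hR1 hR
  rw [intervalIntegral.integral_mul_const, integral_id] at h2
  rw [le_div_iff₀ hpi]
  norm_num at h2 h1
  nlinarith

lemma IsSigma.prof_le {u : E2 → ℝ} (h : IsSigma u) (hH : H u ≤ 1) {r : ℝ} (hr0 : 0 < r)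
    (hr1 : r < 1) : prof u r ≤ 2 + √(-log r / (2 * π)) := by
  have hpi := pi_gt_three
  have hh := h.prof_half_sq_le hH
  have hs0 := Real.sqrt_nonneg (-log r / (2 * π))
  rcases le_total (1 / 2) r with hr | hr
  · have h1 : prof u r ≤ prof u (1 / 2) := h.prof_anti (by norm_num) hr
    have h2 : prof u (1 / 2) ≤ 2 := by
      have : 4 / π ≤ 4 := div_le_self (by norm_num) (by linarith)
      nlinarith
    linarith
  have hp : 0 < 1 - r ^ 2 := by nlinarith
  have hgu : prof u r ≤ gprof u r := by
    rw [gprof, le_div_iff₀ (Real.sqrt_pos.mpr hp)]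
    have : √(1 - r ^ 2) ≤ 1 := Real.sqrt_le_one.mpr (by nlinarith)
    nlinarith [h.nonneg (pt r), show prof u r = u (pt r) from rfl]
  have hg2 : gprof u (1 / 2) ≤ 2 := by
    rw [gprof, div_le_iff₀ (Real.sqrt_pos.mpr (by norm_num))]
    refine le_of_sq_le_sq ?_ (by positivity)
    rw [mul_pow, Real.sq_sqrt (by norm_num)]
    have : 4 / π ≤ 4 / 3 := div_le_div_of_nonneg_left (by norm_num) (by norm_num) hpi.le
    linarith
  have hdiff := h.isRad.gprof_sub_sq_le hH hr0 hr (by norm_num)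
  have hlog1 : hlog (1 / 2) - hlog r ≤ -log r := by
    have h1 : log (1 - r ^ 2) ≤ 0 := Real.log_nonpos hp.le (by nlinarith)
    have h2 : hlog (1 / 2) ≤ 0 := by
      have h3 : 2 * log (1 / 2) ≤ log (1 - (1 / 2) ^ 2) := by
        rw [show 2 * log (1 / 2) = log ((1 / 2) ^ 2) by rw [Real.log_pow]; norm_num]
        exact Real.log_le_log (by norm_num) (by norm_num)
      unfold hlog
      linarith
    unfold hlog at *
    linarith
  have : gprof u r - gprof u (1 / 2) ≤ √(-log r / (2 * π)) := by
    refine Real.le_sqrt_of_sq_le ?_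
    calc (gprof u r - gprof u (1 / 2)) ^ 2 = (gprof u (1 / 2) - gprof u r) ^ 2 := by ring
      _ ≤ _ := hdiff
      _ ≤ _ := by gcongr
  linarith

/-- The subcritical exponentials are dominated by an integrable power of the radius. -/
lemma exists_exp_bound {ε : ℝ} (h0 : 0 < ε) (h1 : ε < 4 * π) :
    ∃ β : ℝ, β < 2 ∧ ∃ C : ℝ, ∀ u : E2 → ℝ, IsSigma u → H u ≤ 1 → ∀ x : E2, 0 < ‖x‖ → ‖x‖ < 1 →
      rexp ((4 * π - ε) * u x ^ 2) ≤ C * ‖x‖ ^ (-β) := by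
  have hpi := pi_pos
  set δ := ε / (4 * π) with hδ
  have hδ0 : 0 < δ := by positivity
  refine ⟨(4 * π - ε) * (1 + δ) / (2 * π), ?_, rexp ((4 * π - ε) * ((1 + 1 / δ) * 4)), ?_⟩
  · rw [div_lt_iff₀ (by positivity)]
    have e : ε = 4 * π * δ := by rw [hδ]; field_simp
    rw [e]
    nlinarith [mul_pos hpi (sq_pos_of_pos hδ0)]
  · intro u hu hH x hx0 hx1
    have hL : 0 ≤ -log ‖x‖ := by
      have := Real.log_nonpos hx0.le hx1.le
      linarith
    have hb := hu.prof_le hH hx0 hx1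
    rw [← hu.isRad.eq_prof x] at hb
    rw [Real.rpow_def_of_pos hx0, ← Real.exp_add, Real.exp_le_exp]
    have hs := Real.sq_sqrt (show 0 ≤ -log ‖x‖ / (2 * π) by positivity)
    have hs0 := Real.sqrt_nonneg (-log ‖x‖ / (2 * π))
    set q := √(-log ‖x‖ / (2 * π))
    have h2 : u x ^ 2 ≤ (2 + q) ^ 2 := pow_le_pow_left₀ (hu.nonneg x) hb 2
    have h3 : (2 + q) ^ 2 ≤ (1 + 1 / δ) * 4 + (1 + δ) * q ^ 2 := by
      have : (1 + 1 / δ) * 4 + (1 + δ) * q ^ 2 - (2 + q) ^ 2 = (2 - δ * q) ^ 2 / δ := by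
        field_simp
        ring
      have : 0 ≤ (2 - δ * q) ^ 2 / δ := by positivity
      linarith
    have h4 := mul_le_mul_of_nonneg_left (h2.trans h3) (show 0 ≤ 4 * π - ε by linarith)
    rw [hs] at h4
    refine h4.trans (le_of_eq ?_)
    ring

lemma integrableOn_norm_rpow {β : ℝ} (hβ : β < 2) :
    IntegrableOn (fun x : E2 => ‖x‖ ^ (-β)) B2 := by
  refine (integrableOn_fun_norm_addHaar volume (f := fun r : ℝ => r ^ (-β))).mpr ?_
  have h := (intervalIntegral.intervalIntegrable_rpow' (a := 0) (b := 1) (r := 1 - β)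
    (by linarith))
  rw [intervalIntegrable_iff_integrableOn_Ioo_of_le zero_le_one] at h
  refine h.congr_fun (fun r hr => ?_) measurableSet_Ioo
  have h0 : 0 < r := hr.1
  simp [sub_eq_add_neg, Real.rpow_add h0]

/-! ### Compactness -/

lemma ae_punctured : ∀ᵐ x ∂(volume.restrict B2), 0 < ‖(x : E2)‖ ∧ ‖x‖ < 1 := by
  have hnz : ∀ᵐ x ∂(volume.restrict B2), (x : E2) ≠ 0 :=
    ae_restrict_of_ae (by simp [ae_iff])
  filter_upwards [hnz, ae_restrict_mem Metric.isOpen_ball.measurableSet] with x hx hx'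
  exact ⟨norm_pos_iff.mpr hx, by simpa [B2] using hx'⟩

lemma continuousAt_hlog {r : ℝ} (h0 : 0 < r) (h1 : r < 1) : ContinuousAt hlog r :=
  (hasDerivAt_hlog h0 h1).continuousAt

lemma IsRad.gprof_sub_sq_le_abs {u : E2 → ℝ} (h : IsRad u) (hH : H u ≤ 1) {s r : ℝ}
    (hs0 : 0 < s) (hs1 : s < 1) (hr0 : 0 < r) (hr1 : r < 1) :
    (gprof u r - gprof u s) ^ 2 ≤ |hlog r - hlog s| / (2 * π) := by
  have hpi := pi_pos
  rcases le_total s r with hsr | hsr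
  · refine (h.gprof_sub_sq_le hH hs0 hsr hr1).trans ?_
    gcongr
    exact le_abs_self _
  · rw [← neg_sq, neg_sub, abs_sub_comm]
    refine (h.gprof_sub_sq_le hH hr0 hsr hs1).trans ?_
    gcongr
    exact le_abs_self _

/-- Equicontinuity reduces convergence of the profiles at `r` to convergence at rational
radii. -/
lemma exists_tendsto_gprof {u : ℕ → E2 → ℝ} (hu : ∀ n, IsSigma (u n)) (hH : ∀ n, H (u n) ≤ 1)
    (hq : ∀ q : ℚ, 0 < (q : ℝ) → (q : ℝ) < 1 →
      ∃ l, Tendsto (fun n => gprof (u n) q) atTop (nhds l))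
    {r : ℝ} (hr0 : 0 < r) (hr1 : r < 1) :
    ∃ l, Tendsto (fun n => gprof (u n) r) atTop (nhds l) := by
  refine cauchySeq_tendsto_of_complete (Metric.cauchySeq_iff'.mpr fun η hη => ?_)
  have hpi := pi_pos
  have hnear : ∀ᶠ s in nhds r, |hlog r - hlog s| / (2 * π) < (η / 3) ^ 2 ∧ 0 < s ∧ s < 1 := by
    have h1 : ContinuousAt (fun s => |hlog r - hlog s| / (2 * π)) r :=
      ((continuousAt_const.sub (continuousAt_hlog hr0 hr1)).abs).div_const _
    have h2 : ∀ᶠ s in nhds r, |hlog r - hlog s| / (2 * π) < (η / 3) ^ 2 :=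
      h1.eventually_lt continuousAt_const (by simp; positivity)
    filter_upwards [h2, lt_mem_nhds hr0, gt_mem_nhds hr1] with s a b c
    exact ⟨a, b, c⟩
  obtain ⟨a, b, hab, hsub⟩ := mem_nhds_iff_exists_Ioo_subset.mp hnear
  obtain ⟨q, hqa, hqb⟩ := exists_rat_btwn (hab.1.trans hab.2)
  obtain ⟨hq1, hq2, hq3⟩ := hsub ⟨hqa, hqb⟩
  obtain ⟨l, hl⟩ := hq q hq2 hq3
  obtain ⟨N, hN⟩ := Metric.cauchySeq_iff'.mp hl.cauchySeq (η / 3) (by positivity)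
  refine ⟨N, fun n hn => ?_⟩
  have hclose : ∀ n, |gprof (u n) r - gprof (u n) q| < η / 3 := fun n =>
    abs_lt_of_sq_lt_sq
      (((hu n).isRad.gprof_sub_sq_le_abs (hH n) hq2 hq3 hr0 hr1).trans_lt hq1) (by positivity)
  have h1 := abs_lt.mp (hclose n)
  have h2 := abs_lt.mp (hclose N)
  have h3 := hN n hn
  rw [Real.dist_eq] at h3 ⊢
  have h3' := abs_lt.mp h3
  rw [abs_lt]
  constructor <;> linarith [h1.1, h1.2, h2.1, h2.2, h3'.1, h3'.2]

lemma exists_convergent_subseq {u : ℕ → E2 → ℝ} (hu : ∀ n, IsSigma (u n))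
    (hH : ∀ n, H (u n) ≤ 1) :
    ∃ φ : ℕ → ℕ, StrictMono φ ∧ ∃ w : E2 → ℝ, Measurable w ∧
      ∀ x : E2, 0 < ‖x‖ → ‖x‖ < 1 → Tendsto (fun n => u (φ n) x) atTop (nhds (w x)) := by
  classical
  -- Sequential compactness of a countable product of intervals replaces a diagonal argument.
  let M : ℚ → ℝ := fun q => (2 + √(-log q / (2 * π))) / √(1 - (q : ℝ) ^ 2)
  let K : Set (ℚ → ℝ) := Set.pi univ fun q => Icc 0 (max 0 (M q))
  have hK : IsCompact K := isCompact_univ_pi fun q => isCompact_Icc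
  let f : ℕ → ℚ → ℝ := fun n q => if 0 < (q : ℝ) ∧ (q : ℝ) < 1 then gprof (u n) q else 0
  have hf : ∀ n, f n ∈ K := by
    intro n q _
    by_cases hq : 0 < (q : ℝ) ∧ (q : ℝ) < 1
    · have hp : 0 < √(1 - (q : ℝ) ^ 2) := Real.sqrt_pos.mpr (by nlinarith [hq.1, hq.2])
      simp only [f, hq, and_self, if_true, gprof]
      refine ⟨div_nonneg ((hu n).nonneg _) hp.le, le_max_of_le_right ?_⟩
      exact div_le_div_of_nonneg_right ((hu n).prof_le (hH n) hq.1 hq.2) hp.le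
    · simp only [f, if_neg hq]
      exact ⟨le_rfl, le_max_left _ _⟩
  obtain ⟨a, -, φ, hφ, hlim⟩ := hK.tendsto_subseq hf
  refine ⟨φ, hφ, ?_⟩
  have hg : ∀ r : ℝ, 0 < r → r < 1 → ∃ l, Tendsto (fun n => gprof (u (φ n)) r) atTop (nhds l) := by
    intro r hr0 hr1
    refine exists_tendsto_gprof (fun n => hu (φ n)) (fun n => hH (φ n)) (fun q hq0 hq1 => ?_)
      hr0 hr1
    refine ⟨a q, ?_⟩
    have := (tendsto_pi_nhds.mp hlim) q
    refine this.congr fun n => ?_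
    exact if_pos ⟨hq0, hq1⟩
  have hx : ∀ x : E2, ∃ l : ℝ, Tendsto
      (fun n => ({x : E2 | 0 < ‖x‖ ∧ ‖x‖ < 1}.indicator (u (φ n))) x) atTop (nhds l) := by
    intro x
    by_cases hx : 0 < ‖x‖ ∧ ‖x‖ < 1
    · obtain ⟨l, hl⟩ := hg ‖x‖ hx.1 hx.2
      refine ⟨l * √(1 - ‖x‖ ^ 2), (hl.mul_const _).congr fun n => ?_⟩
      have hp : 0 < √(1 - ‖x‖ ^ 2) := Real.sqrt_pos.mpr (by nlinarith [hx.1, hx.2])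
      rw [indicator_of_mem (by exact hx), (hu (φ n)).isRad.eq_prof x, gprof,
        div_mul_cancel₀ _ hp.ne']
    · refine ⟨0, tendsto_const_nhds.congr fun n => ?_⟩
      rw [indicator_of_notMem (by exact hx)]
  choose w hw using hx
  have hmeas : MeasurableSet {x : E2 | 0 < ‖x‖ ∧ ‖x‖ < 1} :=
    (measurableSet_lt measurable_const measurable_norm).inter
      (measurableSet_lt measurable_norm measurable_const)
  refine ⟨w, measurable_of_tendsto_metrizable
    (fun n => ((hu (φ n)).1.1.continuous.measurable).indicator hmeas)
    (tendsto_pi_nhds.mpr hw), fun x h0 h1 => (hw x).congr fun n => ?_⟩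
  rw [indicator_of_mem (by exact ⟨h0, h1⟩)]

/-- Subcritical continuity of the exponential integral along bounded pointwise convergent
sequences. -/
lemma tendsto_integral_exp {ε : ℝ} (h0 : 0 < ε) (h1 : ε < 4 * π) {u : ℕ → E2 → ℝ}
    (hu : ∀ᶠ n in atTop, IsSigma (u n) ∧ H (u n) ≤ 1) (hc : ∀ n, Continuous (u n))
    {w : E2 → ℝ} (hwm : Measurable w)
    (hw : ∀ x : E2, 0 < ‖x‖ → ‖x‖ < 1 → Tendsto (fun n => u n x) atTop (nhds (w x))) :
    Tendsto (fun n => ∫ x in B2, rexp ((4 * π - ε) * u n x ^ 2)) atTop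
      (nhds (∫ x in B2, rexp ((4 * π - ε) * w x ^ 2))) ∧
    IntegrableOn (fun x => rexp ((4 * π - ε) * w x ^ 2)) B2 := by
  obtain ⟨β, hβ, C, hC⟩ := exists_exp_bound h0 h1
  have hG : IntegrableOn (fun x : E2 => C * ‖x‖ ^ (-β)) B2 :=
    (integrableOn_norm_rpow hβ).const_mul C
  have hlim : ∀ᵐ x ∂(volume.restrict B2), Tendsto (fun n => rexp ((4 * π - ε) * u n x ^ 2)) atTop
      (nhds (rexp ((4 * π - ε) * w x ^ 2))) := by
    filter_upwards [ae_punctured] with x hx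
    exact (Real.continuous_exp.tendsto _).comp (((hw x hx.1 hx.2).pow 2).const_mul _)
  have hbd : ∀ᶠ n in atTop, ∀ᵐ x ∂(volume.restrict B2),
      ‖rexp ((4 * π - ε) * u n x ^ 2)‖ ≤ C * ‖x‖ ^ (-β) := by
    filter_upwards [hu] with n hn
    filter_upwards [ae_punctured] with x hx
    rw [Real.norm_of_nonneg (Real.exp_pos _).le]
    exact hC _ hn.1 hn.2 x hx.1 hx.2
  constructor
  · refine tendsto_integral_filter_of_dominated_convergence _ ?_ hbd hG hlim
    exact Eventually.of_forall fun n => by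
      have := hc n
      exact Continuous.aestronglyMeasurable (by fun_prop)
  · refine hG.mono' (by fun_prop) ?_
    filter_upwards [hlim, ae_punctured] with x hx hx'
    rw [Real.norm_of_nonneg (Real.exp_pos _).le]
    refine le_of_tendsto hx ?_
    filter_upwards [hu] with n hn
    exact hC _ hn.1 hn.2 x hx'.1 hx'.2

/-- The admissible set of the variational problem. -/
def Adm : Set (E2 → ℝ) := {u | IsSigma u ∧ H u ≤ 1}

lemma convex_Adm : Convex ℝ Adm := by
  rintro u ⟨hu, hu1⟩ w ⟨hw, hw1⟩ s t hs ht hst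
  refine ⟨hu.comb hw hs ht, ?_⟩
  rw [H_convex_comb hu.isRad hw.isRad hst]
  have := (hu.isRad.sub hw.isRad).H_nonneg
  nlinarith [mul_nonneg (mul_nonneg hs ht) this]

/-- A Mazur-type lemma: almost minimizers `w n` of `H` over the convex hulls of the tails of an
admissible sequence form a Cauchy sequence, by the parallelogram identity. -/
lemma exists_cauchy_convex_comb {u : ℕ → E2 → ℝ} (hu : ∀ n, u n ∈ Adm) :
    ∃ w : ℕ → E2 → ℝ, (∀ n, w n ∈ convexHull ℝ (u '' Ici n)) ∧ (∀ n, w n ∈ Adm) ∧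
      (∃ d, Tendsto (fun n => H (w n)) atTop (nhds d)) ∧
      Tendsto (fun p : ℕ × ℕ => H (w p.1 - w p.2)) atTop (nhds 0) := by
  set K : ℕ → Set (E2 → ℝ) := fun n => convexHull ℝ (u '' Ici n) with hK
  have hKA : ∀ n, K n ⊆ Adm := fun n =>
    convexHull_min (by rintro _ ⟨m, -, rfl⟩; exact hu m) convex_Adm
  have hKanti : ∀ {m n}, m ≤ n → K n ⊆ K m := fun hmn =>
    convexHull_mono (image_mono (Ici_subset_Ici.mpr hmn))
  have hne : ∀ n, (H '' K n).Nonempty := fun n =>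
    ⟨_, u n, subset_convexHull ℝ _ ⟨n, self_mem_Ici, rfl⟩, rfl⟩
  have hbb : ∀ n, BddBelow (H '' K n) := fun n =>
    ⟨0, by rintro _ ⟨v, hv, rfl⟩; exact (hKA n hv).1.isRad.H_nonneg⟩
  set d : ℕ → ℝ := fun n => sInf (H '' K n) with hd
  have hdle : ∀ n, ∀ v ∈ K n, d n ≤ H v := fun n v hv => csInf_le (hbb n) ⟨v, hv, rfl⟩
  have hdmono : Monotone d := fun m n hmn =>
    csInf_le_csInf (hbb m) (hne n) (image_mono (hKanti hmn))
  have hw : ∀ n : ℕ, ∃ v ∈ K n, H v < d n + 1 / ((n : ℝ) + 1) := fun n => by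
    obtain ⟨_, ⟨v, hv, rfl⟩, h⟩ := exists_lt_of_csInf_lt (hne n)
      (lt_add_of_pos_right (d n) (show 0 < 1 / ((n : ℝ) + 1) by positivity))
    exact ⟨v, hv, h⟩
  choose w hwK hwlt using hw
  have hdbd : BddAbove (range d) := ⟨1, by
    rintro _ ⟨n, rfl⟩
    exact (hdle n _ (hwK n)).trans (hKA n (hwK n)).2⟩
  have hdlim : Tendsto d atTop (nhds (⨆ n, d n)) := tendsto_atTop_ciSup hdmono hdbd
  set D := ⨆ n, d n
  have hdD : ∀ n, d n ≤ D := fun n => le_ciSup hdbd n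
  have hone := tendsto_one_div_add_atTop_nhds_zero_nat (𝕜 := ℝ)
  have hup : Tendsto (fun n : ℕ => d n + 1 / ((n : ℝ) + 1)) atTop (nhds D) := by
    simpa using hdlim.add hone
  refine ⟨w, hwK, fun n => hKA n (hwK n), ⟨D, tendsto_of_tendsto_of_tendsto_of_le_of_le hdlim hup
    (fun n => hdle n _ (hwK n)) (fun n => (hwlt n).le)⟩, ?_⟩
  -- The bound supplied by the parallelogram identity at the midpoint of `w m` and `w n`.
  have hpar : ∀ m n, H (w m - w n) ≤
      2 * (H (w m) + H (w n)) - 4 * d (min m n) := by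
    intro m n
    have h1 := H_convex_comb (hKA m (hwK m)).1.isRad (hKA n (hwK n)).1.isRad
      (s := 1 / 2) (t := 1 / 2) (by norm_num)
    have h2 : (1 / 2 : ℝ) • w m + (1 / 2 : ℝ) • w n ∈ K (min m n) :=
      convex_convexHull ℝ _ (hKanti (min_le_left m n) (hwK m)) (hKanti (min_le_right m n) (hwK n))
        (by norm_num) (by norm_num) (by norm_num)
    have h3 := hdle _ _ h2
    linarith
  have hHw : Tendsto (fun n => H (w n)) atTop (nhds D) :=
    tendsto_of_tendsto_of_tendsto_of_le_of_le hdlim hup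
      (fun n => hdle n _ (hwK n)) (fun n => (hwlt n).le)
  have hf : Tendsto (fun p : ℕ × ℕ => p.1) atTop atTop := by
    rw [← prod_atTop_atTop_eq]
    exact tendsto_fst
  have hs : Tendsto (fun p : ℕ × ℕ => p.2) atTop atTop := by
    rw [← prod_atTop_atTop_eq]
    exact tendsto_snd
  have hmin : Tendsto (fun p : ℕ × ℕ => min p.1 p.2) atTop atTop :=
    tendsto_atTop.mpr fun b => by
      filter_upwards [hf.eventually_ge_atTop b, hs.eventually_ge_atTop b] with p h1 h2
      exact le_min h1 h2
  have hbound : Tendsto (fun p : ℕ × ℕ => 2 * (H (w p.1) + H (w p.2)) - 4 * d (min p.1 p.2)) atTop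
      (nhds (2 * (D + D) - 4 * D)) :=
    (((hHw.comp hf).add (hHw.comp hs)).const_mul 2).sub ((hdlim.comp hmin).const_mul 4)
  rw [show 2 * (D + D) - 4 * D = 0 by ring] at hbound
  exact squeeze_zero (fun p => ((hKA _ (hwK p.1)).1.isRad.sub (hKA _ (hwK p.2)).1.isRad).H_nonneg)
    (fun p => hpar p.1 p.2) hbound

lemma tendsto_of_mem_convexHull {u w : ℕ → E2 → ℝ}
    (hw : ∀ n, w n ∈ convexHull ℝ (u '' Ici n)) {x : E2} {l : ℝ}
    (hl : Tendsto (fun n => u n x) atTop (nhds l)) :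
    Tendsto (fun n => w n x) atTop (nhds l) := by
  refine Metric.tendsto_atTop.mpr fun η hη => ?_
  obtain ⟨N, hN⟩ := Metric.tendsto_atTop.mp hl η hη
  refine ⟨N, fun n hn => ?_⟩
  have hconv : Convex ℝ {v : E2 → ℝ | v x ∈ Metric.ball l η} :=
    (convex_ball l η).linear_preimage (LinearMap.proj x : (E2 → ℝ) →ₗ[ℝ] ℝ)
  refine convexHull_min ?_ hconv (hw n)
  rintro _ ⟨m, hm, rfl⟩
  exact hN m (hn.trans hm)

/-- `Adm` contains a function that is positive on the disc of radius `1/2`. -/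
lemma exists_pos_Adm : ∃ w ∈ Adm, ∀ x ∈ Metric.ball (0 : E2) (1 / 2), 0 < w x := by
  let b : E2 → ℝ := fun x => Real.smoothTransition (1 / 2 - ‖x‖ ^ 2)
  have hb : IsSigma b := by
    refine ⟨IsTest.of_radius (R := 3 / 4) ?_ (by norm_num) ?_, ?_⟩
    · exact Real.smoothTransition.contDiff.comp (contDiff_const.sub (contDiff_norm_sq ℝ))
    · intro x hx
      exact Real.smoothTransition.zero_of_nonpos (by nlinarith)
    · intro x y hxy
      refine Real.smoothTransition.monotone ?_
      have := pow_le_pow_left₀ (norm_nonneg x) hxy 2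
      linarith
  have hH := hb.isRad.H_nonneg
  have hc : 0 < 1 / (1 + H b) := by positivity
  refine ⟨(1 / (1 + H b)) • b, ⟨hb.smul hc.le, ?_⟩, fun x hx => ?_⟩
  · rw [H_smul hb.isRad, div_pow, div_mul_eq_mul_div, div_le_one (by positivity)]
    nlinarith
  · have : ‖x‖ < 1 / 2 := by simpa using hx
    exact mul_pos hc (Real.smoothTransition.pos_of_pos (by nlinarith [norm_nonneg x]))

end Radial

/-- For every `ε ∈ (0, 4π)` the finite supremum
`S_ε = sup{∫_B e^{(4π−ε)u²} : u ∈ Σ, H(u) ≤ 1}` is attained in the completion of `Σ`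
under the Hardy norm: there are a measurable `u_ε` and a sequence `(u_k) ⊆ Σ` with
`H(u_k) ≤ 1`, `H(u_k) → 1`, `H(u_j − u_k) → 0` as `j, k → ∞`, and `u_k → u_ε` a.e. in `B`,
such that `∫_B e^{(4π−ε)u_ε²} = S_ε`. -/
theorem subcritical_sup_attained :
    ∀ ε : ℝ, 0 < ε → ε < 4 * π →
      ∃ Sε : ℝ,
        IsLUB {t : ℝ | ∃ u : E2 → ℝ, IsSigma u ∧ H u ≤ 1 ∧
          t = ∫ x in B2, Real.exp ((4 * π - ε) * (u x) ^ 2)} Sε ∧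
        ∃ (uε : E2 → ℝ) (uk : ℕ → E2 → ℝ),
          Measurable uε ∧
          (∀ k, IsSigma (uk k)) ∧
          (∀ k, H (uk k) ≤ 1) ∧
          Tendsto (fun k => H (uk k)) atTop (nhds 1) ∧
          Tendsto (fun p : ℕ × ℕ => H (uk p.1 - uk p.2)) atTop (nhds 0) ∧
          (∀ᵐ x ∂(volume.restrict B2), Tendsto (fun k => uk k x) atTop (nhds (uε x))) ∧
          (∫ x in B2, Real.exp ((4 * π - ε) * (uε x) ^ 2)) = Sε := by
  intro ε h0 h1
  have hα : 0 < 4 * π - ε := by linarith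
  set F : (E2 → ℝ) → ℝ := fun u => ∫ x in B2, Real.exp ((4 * π - ε) * (u x) ^ 2) with hF
  set T : Set ℝ := {t : ℝ | ∃ u : E2 → ℝ, IsSigma u ∧ H u ≤ 1 ∧
          t = ∫ x in B2, Real.exp ((4 * π - ε) * (u x) ^ 2)} with hT
  obtain ⟨b, hbA, hbpos⟩ := exists_pos_Adm
  have hint : ∀ u ∈ Adm, IntegrableOn (fun x => rexp ((4 * π - ε) * u x ^ 2)) B2 :=
    fun u hu => (tendsto_integral_exp h0 h1 (u := fun _ => u) (w := u)
      (Eventually.of_forall fun _ => hu) (fun _ => hu.1.1.1.continuous)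
      hu.1.1.1.continuous.measurable (fun _ _ _ => tendsto_const_nhds)).2
  have hTne : T.Nonempty := ⟨F b, b, hbA.1, hbA.2, rfl⟩
  have hTbd : BddAbove T := by
    obtain ⟨β, hβ, C, hC⟩ := exists_exp_bound h0 h1
    refine ⟨∫ x in B2, C * ‖x‖ ^ (-β), ?_⟩
    rintro _ ⟨u, hu, hu1, rfl⟩
    refine integral_mono_ae (hint u ⟨hu, hu1⟩) ((integrableOn_norm_rpow hβ).const_mul C) ?_
    filter_upwards [ae_punctured] with x hx
    exact hC u hu hu1 x hx.1 hx.2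
  have hLUB := isLUB_csSup hTne hTbd
  obtain ⟨t, -, htlim, htT⟩ := exists_seq_tendsto_sSup hTne hTbd
  choose v hvS hvH hvt using htT
  obtain ⟨φ, hφ, w, hwm, hw⟩ := exists_convergent_subseq hvS hvH
  obtain ⟨hFlim, hwint⟩ := tendsto_integral_exp h0 h1
    (Eventually.of_forall fun n => ⟨hvS (φ n), hvH (φ n)⟩)
    (fun n => (hvS (φ n)).1.1.continuous) hwm hw
  have hFw : F w = sSup T := by
    refine tendsto_nhds_unique hFlim ((htlim.comp hφ.tendsto_atTop).congr fun n => ?_)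
    exact hvt (φ n)
  obtain ⟨z, hzhull, hzA, ⟨d, hd⟩, hcauchy⟩ :=
    exists_cauchy_convex_comb (u := fun n => v (φ n)) fun n => ⟨hvS (φ n), hvH (φ n)⟩
  have hzlim : ∀ x : E2, 0 < ‖x‖ → ‖x‖ < 1 → Tendsto (fun n => z n x) atTop (nhds (w x)) :=
    fun x hx0 hx1 => tendsto_of_mem_convexHull hzhull (hw x hx0 hx1)
  have hd1 : d ≤ 1 := le_of_tendsto' hd fun n => (hzA n).2
  have hdeq : d = 1 := by
    by_contra hne
    have hdlt : d < 1 := lt_of_le_of_ne hd1 hne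
    -- If `d < 1`, then `c • z n` is still admissible for some `c > 1`.
    obtain ⟨c, hc1, hcd⟩ : ∃ c : ℝ, 1 < c ∧ c ^ 2 * d < 1 := by
      have hcont : ContinuousAt (fun c : ℝ => c ^ 2 * d) 1 := by fun_prop
      have hev : ∀ᶠ c in nhds (1 : ℝ), c ^ 2 * d < 1 :=
        hcont.eventually_lt continuousAt_const (by simpa using hdlt)
      obtain ⟨c, hc, hc'⟩ := ((hev.filter_mono nhdsWithin_le_nhds).and
        (self_mem_nhdsWithin (s := Set.Ioi (1 : ℝ)))).exists
      exact ⟨c, hc', hc⟩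
    have hc0 : 0 ≤ c := by linarith
    have hadm : ∀ᶠ n in atTop, IsSigma (c • z n) ∧ H (c • z n) ≤ 1 := by
      filter_upwards [(hd.const_mul (c ^ 2)).eventually_lt_const hcd] with n hn
      exact ⟨(hzA n).1.smul hc0, by rw [H_smul (hzA n).1.isRad]; exact hn.le⟩
    obtain ⟨hclim, hcint⟩ := tendsto_integral_exp h0 h1 (w := c • w) hadm
      (fun n => (hzA n).1.1.1.continuous.const_smul c) (hwm.const_smul c)
      (fun x hx0 hx1 => (hzlim x hx0 hx1).const_smul c)
    have hle : F (c • w) ≤ F w := by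
      rw [hFw]
      refine le_of_tendsto hclim ?_
      filter_upwards [hadm] with n hn
      exact hLUB.1 ⟨c • z n, hn.1, hn.2, rfl⟩
    have hptw : ∀ x, rexp ((4 * π - ε) * w x ^ 2) ≤ rexp ((4 * π - ε) * (c • w) x ^ 2) := by
      intro x
      refine Real.exp_le_exp.mpr (mul_le_mul_of_nonneg_left ?_ hα.le)
      simp only [Pi.smul_apply, smul_eq_mul, mul_pow]
      exact le_mul_of_one_le_left (sq_nonneg _) (one_le_pow₀ hc1.le)
    have hae : (fun x => rexp ((4 * π - ε) * w x ^ 2)) =ᵐ[volume.restrict B2]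
        fun x => rexp ((4 * π - ε) * (c • w) x ^ 2) :=
      (integral_eq_iff_of_ae_le hwint hcint (Eventually.of_forall hptw)).mp
        (le_antisymm (integral_mono hwint hcint hptw) hle)
    have hw0 : ∀ᵐ x ∂(volume.restrict B2), w x = 0 := by
      filter_upwards [hae] with x hx
      have h2 := mul_left_cancel₀ hα.ne' (Real.exp_injective hx)
      simp only [Pi.smul_apply, smul_eq_mul, mul_pow] at h2
      have h3 : (c ^ 2 - 1) * w x ^ 2 = 0 := by linarith
      rcases mul_eq_zero.mp h3 with h4 | h4
      · nlinarith
      · exact pow_eq_zero_iff two_ne_zero |>.mp h4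
    -- Then the supremum would be attained at `0`, but `b` does strictly better.
    have hle' : F b ≤ F w := by
      rw [hFw]
      exact hLUB.1 ⟨b, hbA.1, hbA.2, rfl⟩
    have hptw' : (fun x => rexp ((4 * π - ε) * w x ^ 2)) ≤ᵐ[volume.restrict B2]
        fun x => rexp ((4 * π - ε) * b x ^ 2) := by
      filter_upwards [hw0] with x hx
      refine Real.exp_le_exp.mpr (mul_le_mul_of_nonneg_left ?_ hα.le)
      rw [hx]
      simpa using sq_nonneg (b x)
    have hae' : (fun x => rexp ((4 * π - ε) * w x ^ 2)) =ᵐ[volume.restrict B2]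
        fun x => rexp ((4 * π - ε) * b x ^ 2) :=
      (integral_eq_iff_of_ae_le hwint (hint b hbA) hptw').mp
        (le_antisymm (integral_mono_ae hwint (hint b hbA) hptw') hle')
    have hb0 : ∀ᵐ x ∂(volume.restrict B2), b x = 0 := by
      filter_upwards [hw0, hae'] with x hx hx'
      have h2 := mul_left_cancel₀ hα.ne' (Real.exp_injective hx')
      rw [hx] at h2
      exact pow_eq_zero_iff two_ne_zero |>.mp (by simpa using h2.symm)
    have hball : ∀ᵐ x ∂(volume.restrict (Metric.ball (0 : E2) (1 / 2))), False := by
      have hsub : Metric.ball (0 : E2) (1 / 2) ⊆ B2 := Metric.ball_subset_ball (by norm_num)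
      filter_upwards [ae_restrict_of_ae_restrict_of_subset hsub hb0,
        ae_restrict_mem Metric.isOpen_ball.measurableSet] with x hx hx'
      exact (hbpos x hx').ne' hx
    rw [eventually_false_iff_eq_bot, ae_eq_bot, Measure.restrict_eq_zero] at hball
    exact (Metric.measure_ball_pos volume (0 : E2) (by norm_num : (0 : ℝ) < 1 / 2)).ne' hball
  rw [hdeq] at hd
  refine ⟨sSup T, hLUB, w, z, hwm, fun k => (hzA k).1, fun k => (hzA k).2, hd, hcauchy, ?_, hFw⟩
  filter_upwards [ae_punctured] with x hx
  exact hzlim x hx.1 hx.2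
end
end

section
/- For every u ∈ Σ and every r ∈ (0, 1], the value of u on the circle of radius r satisfies u(r)² ≤ ((1 − r²)/(2π r)) · H_{B \ B_r}(u), where B_r is the open disc of radius r centered at the origin. -/
/-!
For a radial `u`, write `f t = u (t, 0)`. In polar coordinates the Hardy functional on the annulus
`r ≤ |x| < 1` is at least `2π ∫_r^1 (f'² - f² / (1 - t²)²) t dt` (only `|f'(|x|)| ≤ |∇u x|` is
needed, see `abs_deriv_profile_le`), so the theorem reduces to a one-dimensional inequality.

With `P t = t / (1 - t²)`, completing the square gives
`t f'² - t f² / (1 - t²)² + (P f²)' = t (f' + f / (1 - t²))² + (1 - t)² f² / (1 - t²)² ≥ 0`.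
Integrating from `r` to a radius `R < 1` beyond which `f` vanishes yields
`P r * f r ^ 2 ≤ ∫_r^R (f'² - f² / (1 - t²)²) t dt` (`profile_bound`), which is the claim after
division by `P r`.
-/

open MeasureTheory Real Filter

noncomputable section

/-- Integration in polar coordinates of a radial function over the annulus `r ≤ |x| < 1`. No
integrability is needed. -/
lemma setIntegral_annulus (r : ℝ) (hr : 0 < r) (F : ℝ → ℝ) :
    ∫ x in B2 \ Metric.ball (0 : E2) r, F ‖x‖ = 2 * π * ∫ t in Set.Ico r 1, t * F t := by
  have hm : MeasurableSet (B2 \ Metric.ball (0 : E2) r) :=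
    measurableSet_ball.diff measurableSet_ball
  have h1 : ∀ x : E2, (B2 \ Metric.ball (0 : E2) r).indicator (fun x => F ‖x‖) x
      = (Set.Ico r 1).indicator F ‖x‖ := by
    intro x
    by_cases hx : r ≤ ‖x‖ ∧ ‖x‖ < 1
    · rw [Set.indicator_of_mem, Set.indicator_of_mem]
      · exact hx
      · simp [B2, hx.1, hx.2]
    · rw [Set.indicator_of_notMem, Set.indicator_of_notMem]
      · exact hx
      · simp only [B2, Set.mem_sdiff, mem_ball_zero_iff, not_lt]
        tauto
  rw [← integral_indicator hm]
  simp_rw [h1]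
  rw [integral_fun_norm_addHaar (volume : Measure E2) ((Set.Ico r 1).indicator F)]
  have hball : (volume : Measure E2).real (Metric.ball 0 1) = π := by
    rw [Measure.real, EuclideanSpace.volume_ball_fin_two]
    simp [pi_pos.le]
  have h2 : ∫ y in Set.Ioi (0 : ℝ), y * (Set.Ico r 1).indicator F y
      = ∫ t in Set.Ico r 1, t * F t := by
    have h3 : (fun y : ℝ => y * (Set.Ico r 1).indicator F y)
        = (Set.Ico r 1).indicator (fun t => t * F t) := by
      ext y
      by_cases hy : y ∈ Set.Ico r 1 <;> simp [hy]
    rw [h3, setIntegral_indicator measurableSet_Ico, Set.inter_eq_self_of_subset_right]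
    exact fun y hy => lt_of_lt_of_le hr hy.1
  rw [hball]
  simp only [finrank_euclideanSpace, Fintype.card_fin, smul_eq_mul, nsmul_eq_mul]
  norm_num
  rw [h2]
  ring

lemma norm_pt_s5 {t : ℝ} (ht : 0 ≤ t) : ‖pt t‖ = t := by
  simp [pt, abs_of_nonneg ht]

lemma IsSigma.eq_of_norm_eq {u : E2 → ℝ} (hu : IsSigma u) {x y : E2} (h : ‖x‖ = ‖y‖) :
    u x = u y :=
  le_antisymm (hu.2 y x h.ge) (hu.2 x y h.le)

lemma contDiff_profile {u : E2 → ℝ} (hu : IsSigma u) :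
    ContDiff ℝ (⊤ : ℕ∞) (fun t => u (pt t)) := by
  have hpt : ContDiff ℝ (⊤ : ℕ∞) pt := by
    have : pt = fun t : ℝ => t • (EuclideanSpace.single 0 1 : E2) := by
      ext t i
      simp [pt]
    rw [this]
    fun_prop
  exact hu.1.1.comp hpt

/-- The radial derivative is the component of the gradient along `x / |x|`. -/
lemma abs_deriv_profile_le {u : E2 → ℝ} (hu : IsSigma u) {x : E2} (hx : x ≠ 0) :
    |deriv (fun t => u (pt t)) ‖x‖| ≤ ‖gradient u x‖ := by
  have hx0 : 0 < ‖x‖ := norm_pos_iff.2 hx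
  set e : E2 := ‖x‖⁻¹ • x with he
  have hne : ‖e‖ = 1 := by
    rw [he, norm_smul, norm_inv, norm_norm, inv_mul_cancel₀ hx0.ne']
  have hxe : ‖x‖ • e = x := by
    rw [he, smul_smul, mul_inv_cancel₀ hx0.ne', one_smul]
  have hd : DifferentiableAt ℝ u (‖x‖ • e) := (hu.1.1.differentiable (by simp)) _
  have h1 : HasDerivAt (fun t : ℝ => t • e) e ‖x‖ := by
    simpa using (hasDerivAt_id ‖x‖).smul_const e
  have h2 : HasDerivAt (fun t : ℝ => u (t • e)) (fderiv ℝ u (‖x‖ • e) e) ‖x‖ :=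
    hd.hasFDerivAt.comp_hasDerivAt ‖x‖ h1
  have h3 : (fun t => u (pt t)) =ᶠ[nhds ‖x‖] fun t : ℝ => u (t • e) := by
    filter_upwards [lt_mem_nhds hx0] with t ht
    apply hu.eq_of_norm_eq
    rw [norm_pt_s5 ht.le, norm_smul, hne, mul_one, norm_of_nonneg ht.le]
  rw [(h2.congr_of_eventuallyEq h3).deriv, hxe, ← inner_gradient_left]
  simpa [hne] using abs_real_inner_le_norm (gradient u x) e

/-- The one-dimensional inequality, with the weight `P t = t / (1 - t²)`. -/
lemma profile_bound {f : ℝ → ℝ} (hf : ContDiff ℝ (⊤ : ℕ∞) f) {r R : ℝ} (hr : 0 < r)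
    (hrR : r ≤ R) (hR : R < 1) (hfR : f R = 0) :
    r / (1 - r ^ 2) * f r ^ 2 ≤
      (∫ t in r..R, t * deriv f t ^ 2) - ∫ t in r..R, t * (f t ^ 2 / (1 - t ^ 2) ^ 2) := by
  have hpos : ∀ t ∈ Set.Icc r R, 0 < 1 - t ^ 2 := fun t ht => by
    nlinarith [ht.1, ht.2]
  have hc : Continuous f := hf.continuous
  have hc' : Continuous (deriv f) := hf.continuous_deriv (by simp)
  have hne : ∀ t ∈ Set.uIcc r R, (1 - t ^ 2) ^ 2 ≠ 0 := fun t ht => by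
    rw [Set.uIcc_of_le hrR] at ht
    exact pow_ne_zero _ (hpos t ht).ne'
  have i1 : IntervalIntegrable (fun t => t * deriv f t ^ 2) volume r R :=
    Continuous.intervalIntegrable (by fun_prop) _ _
  have i2 : IntervalIntegrable (fun t => t * (f t ^ 2 / (1 - t ^ 2) ^ 2)) volume r R := by
    apply ContinuousOn.intervalIntegrable
    exact continuousOn_id.mul (ContinuousOn.div (by fun_prop) (by fun_prop) hne)
  have i3 : IntervalIntegrable (fun t => -((1 + t ^ 2) / (1 - t ^ 2) ^ 2 * f t ^ 2
      + t / (1 - t ^ 2) * (2 * f t * deriv f t))) volume r R := by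
    apply ContinuousOn.intervalIntegrable
    refine ContinuousOn.neg (ContinuousOn.add (ContinuousOn.mul
      (ContinuousOn.div (by fun_prop) (by fun_prop) hne) (by fun_prop))
      (ContinuousOn.mul (ContinuousOn.div (by fun_prop) (by fun_prop) ?_) (by fun_prop)))
    intro t ht
    rw [Set.uIcc_of_le hrR] at ht
    exact (hpos t ht).ne'
  have hd : ∀ t ∈ Set.uIcc r R, HasDerivAt (fun t => -(t / (1 - t ^ 2) * f t ^ 2))
      (-((1 + t ^ 2) / (1 - t ^ 2) ^ 2 * f t ^ 2
      + t / (1 - t ^ 2) * (2 * f t * deriv f t))) t := by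
    intro t ht
    rw [Set.uIcc_of_le hrR] at ht
    have hp := (hpos t ht).ne'
    have hft : HasDerivAt f (deriv f t) t := ((hf.differentiable (by simp)) t).hasDerivAt
    have hq : HasDerivAt (fun t : ℝ => 1 - t ^ 2) (-(2 * t)) t := by
      simpa using (hasDerivAt_pow 2 t).const_sub 1
    refine (((hasDerivAt_id t).div hq hp).mul (hft.pow 2)).neg.congr_deriv ?_
    simp only [Pi.div_apply, Pi.pow_apply, id_eq, Nat.cast_ofNat, Nat.add_one_sub_one, pow_one]
    field_simp
    ring
  have hFTC := intervalIntegral.integral_eq_sub_of_hasDerivAt hd i3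
  have hmono := intervalIntegral.integral_mono_on hrR i3 (i1.sub i2) (fun t ht => by
    have hp := hpos t ht
    have ht0 : 0 < t := hr.trans_le ht.1
    have key : t * deriv f t ^ 2 - t * (f t ^ 2 / (1 - t ^ 2) ^ 2)
        - -((1 + t ^ 2) / (1 - t ^ 2) ^ 2 * f t ^ 2 + t / (1 - t ^ 2) * (2 * f t * deriv f t))
        = t * (deriv f t + f t / (1 - t ^ 2)) ^ 2
          + (1 - t) ^ 2 * f t ^ 2 / (1 - t ^ 2) ^ 2 := by
      have := hp.ne'
      field_simp
      ring
    have : 0 ≤ t * (deriv f t + f t / (1 - t ^ 2)) ^ 2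
          + (1 - t) ^ 2 * f t ^ 2 / (1 - t ^ 2) ^ 2 := by positivity
    linarith)
  rw [hFTC, intervalIntegral.integral_sub i1 i2, hfR] at hmono
  linarith

/-- Lemma 3 (inequality (2.3)): for `u ∈ Σ` and `r ∈ (0, 1]`,
`u(r)² ≤ ((1 − r²)/(2πr)) · H_{B \ B_r}(u)`. -/
theorem pointwise_bound_by_exterior_energy :
    ∀ u : E2 → ℝ, IsSigma u → ∀ r : ℝ, 0 < r → r ≤ 1 →
      (u (pt r)) ^ 2 ≤ (1 - r ^ 2) / (2 * π * r) * HOn (B2 \ Metric.ball 0 r) u := by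
  intro u hu r hr hr1
  set f : ℝ → ℝ := fun t => u (pt t) with hf
  have hfs : ContDiff ℝ (⊤ : ℕ∞) f := contDiff_profile hu
  have hc' : Continuous (deriv f) := hfs.continuous_deriv (by simp)
  obtain ⟨R₀, hR₀, hsupp⟩ := exists_lt_subset_ball (isClosed_tsupport u) hu.1.2.2
  have hzero : ∀ t, 0 ≤ t → R₀ ≤ t → f t = 0 := by
    intro t ht hRt
    by_contra h
    have := hsupp (subset_tsupport u (Function.mem_support.2 h))
    rw [mem_ball_zero_iff, norm_pt_s5 ht] at this
    linarith
  rcases hr1.eq_or_lt with rfl | hr1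
  · have : u (pt 1) = 0 := hzero 1 zero_le_one hR₀.le
    simp [this]
  set R := max r R₀ with hRdef
  have hrR : r ≤ R := le_max_left _ _
  have hR1 : R < 1 := max_lt hr1 hR₀
  have hmain := profile_bound hfs hr hrR hR1 (hzero R (hr.le.trans hrR) (le_max_right _ _))
  have hm : MeasurableSet (B2 \ Metric.ball (0 : E2) r) :=
    measurableSet_ball.diff measurableSet_ball
  have hsub : B2 \ Metric.ball (0 : E2) r ⊆ Metric.closedBall 0 1 :=
    Set.sdiff_subset.trans Metric.ball_subset_closedBall
  -- The potential term: `f` vanishes beyond `R`, which removes the singularity at `t = 1`.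
  have hpot : ∫ x in B2 \ Metric.ball (0 : E2) r, u x ^ 2 / (1 - ‖x‖ ^ 2) ^ 2
      = 2 * π * ∫ t in r..R, t * (f t ^ 2 / (1 - t ^ 2) ^ 2) := by
    have h1 : ∀ x : E2, u x ^ 2 / (1 - ‖x‖ ^ 2) ^ 2
        = (fun t => f t ^ 2 / (1 - t ^ 2) ^ 2) ‖x‖ := by
      intro x
      have : u x = f ‖x‖ := hu.eq_of_norm_eq (norm_pt_s5 (norm_nonneg x)).symm
      simp only [this]
    simp_rw [h1]
    rw [setIntegral_annulus r hr (fun t => f t ^ 2 / (1 - t ^ 2) ^ 2),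
      intervalIntegral.integral_of_le hrR, ← integral_Icc_eq_integral_Ioc]
    congr 1
    apply setIntegral_eq_of_subset_of_forall_sdiff_eq_zero measurableSet_Ico
    · exact fun t ht => ⟨ht.1, ht.2.trans_lt hR1⟩
    · intro t ht
      have hRt : R ≤ t := by
        by_contra h
        exact ht.2 ⟨ht.1.1, (not_le.1 h).le⟩
      simp [hzero t (hr.le.trans ht.1.1) ((le_max_right _ _).trans hRt)]
  have hgrad : 2 * π * ∫ t in r..R, t * deriv f t ^ 2
      ≤ ∫ x in B2 \ Metric.ball (0 : E2) r, ‖gradient u x‖ ^ 2 := by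
    calc 2 * π * ∫ t in r..R, t * deriv f t ^ 2
        ≤ 2 * π * ∫ t in Set.Ico r 1, t * deriv f t ^ 2 := by
          apply mul_le_mul_of_nonneg_left _ (by positivity)
          rw [intervalIntegral.integral_of_le hrR, ← integral_Icc_eq_integral_Ioc]
          apply setIntegral_mono_set
          · have hcont : Continuous fun t => t * deriv f t ^ 2 := by fun_prop
            exact (hcont.integrableOn_Icc (a := r) (b := 1)).mono_set Set.Ico_subset_Icc_self
          · filter_upwards [ae_restrict_mem measurableSet_Ico] with t ht
            have : 0 ≤ t := hr.le.trans ht.1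
            simp only [Pi.zero_apply]
            positivity
          · exact LE.le.eventuallyLE fun t ht => ⟨ht.1, ht.2.trans_lt hR1⟩
      _ = ∫ x in B2 \ Metric.ball (0 : E2) r, deriv f ‖x‖ ^ 2 :=
          (setIntegral_annulus r hr (fun t => deriv f t ^ 2)).symm
      _ ≤ ∫ x in B2 \ Metric.ball (0 : E2) r, ‖gradient u x‖ ^ 2 := by
          have hcg : Continuous fun x : E2 => ‖gradient u x‖ ^ 2 := by
            have : Continuous (gradient u) :=
              (InnerProductSpace.toDual ℝ E2).symm.continuous.comp
                (hu.1.1.continuous_fderiv (by simp))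
            fun_prop
          have hcd : Continuous fun x : E2 => deriv f ‖x‖ ^ 2 := by fun_prop
          apply setIntegral_mono_on _ _ hm
          · intro x hx
            have hx0 : x ≠ 0 := by
              rintro rfl
              exact hx.2 (Metric.mem_ball_self hr)
            rw [← sq_abs (deriv f ‖x‖)]
            exact pow_le_pow_left₀ (abs_nonneg _) (abs_deriv_profile_le hu hx0) 2
          · exact (hcd.continuousOn.integrableOn_compact
              (isCompact_closedBall (0 : E2) 1)).mono_set hsub
          · exact (hcg.continuousOn.integrableOn_compact
              (isCompact_closedBall (0 : E2) 1)).mono_set hsub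
  have hH : 2 * π * (r / (1 - r ^ 2) * f r ^ 2) ≤ HOn (B2 \ Metric.ball 0 r) u := by
    rw [HOn, hpot]
    have := mul_le_mul_of_nonneg_left hmain (by positivity : 0 ≤ 2 * π)
    rw [mul_sub] at this
    linarith
  have hp : 0 < 1 - r ^ 2 := by nlinarith
  calc u (pt r) ^ 2 = (1 - r ^ 2) / (2 * π * r) * (2 * π * (r / (1 - r ^ 2) * f r ^ 2)) := by
        have := hp.ne'
        have := pi_ne_zero
        simp only [hf]
        field_simp
    _ ≤ _ := mul_le_mul_of_nonneg_left hH (by positivity)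
end
end
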